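/- arXiv:2304.03366 — 2 statements merged into one kernel-verified Lean document; each statement's English description precedes it below -/
import Mathlib

section
/- Let n ≥ 1, σ ∈ Mₙ(ℂ), and let ρ = ψψ* ∈ Mₙ(ℂ) for a unit vector ψ ∈ ℂⁿ. Then 2·tr(ρ·(σρσ* − ½{σ*σ, ρ})) + tr((σρ + ρσ* − tr(σρ + ρσ*)·ρ)²) = 0. -/
open Matrix

/-- Compressing a matrix by the rank-one projection `ψψ*` gives a multiple of the projection. -/
lemma vecMulVec_star_mul_mul_vecMulVec_star {n : Type*} [Fintype n]
    (ψ : n → ℂ) (X : Matrix n n ℂ) :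
    vecMulVec ψ (star ψ) * X * vecMulVec ψ (star ψ)
      = (X * vecMulVec ψ (star ψ)).trace • vecMulVec ψ (star ψ) := by
  rw [vecMulVec_mul, vecMulVec_mul_vecMulVec, mul_vecMulVec, trace_vecMulVec,
    ← dotProduct_mulVec, dotProduct_comm (X *ᵥ ψ), vecMulVec_smul]

/-- The vanishing of the purity drift, for an idempotent `ρ` of trace one such that
every compression `ρXρ` is a multiple of `ρ`, and with `τ` in place of the adjoint of `σ`. -/
lemma purity_drift_eq_zero_of_compression {n : Type*} [Fintype n]
    (σ τ ρ : Matrix n n ℂ) (htr : ρ.trace = 1) (hidem : ρ * ρ = ρ)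
    (hcomp : ∀ X, ρ * X * ρ = (X * ρ).trace • ρ) :
    2 * trace (ρ * (σ * ρ * τ - (1 / 2 : ℂ) • (τ * σ * ρ + ρ * (τ * σ))))
      + trace ((σ * ρ + ρ * τ - trace (σ * ρ + ρ * τ) • ρ)
        * (σ * ρ + ρ * τ - trace (σ * ρ + ρ * τ) • ρ)) = 0 := by
  have comm_τ : trace (ρ * τ) = trace (τ * ρ) := trace_mul_comm _ _
  have jump : trace (ρ * (σ * ρ * τ)) = trace (σ * ρ) * trace (τ * ρ) := by
    rw [← Matrix.mul_assoc, ← Matrix.mul_assoc, hcomp, smul_mul, trace_smul, comm_τ, smul_eq_mul]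
  have decay_left : trace (ρ * (τ * σ * ρ)) = trace (τ * σ * ρ) := by
    rw [← Matrix.mul_assoc, hcomp, trace_smul, htr, smul_eq_mul, mul_one]
  have decay_right : trace (ρ * (ρ * (τ * σ))) = trace (τ * σ * ρ) := by
    rw [← Matrix.mul_assoc, hidem, trace_mul_comm]
  have sq_σ : trace (σ * ρ * (σ * ρ)) = trace (σ * ρ) ^ 2 := by
    rw [Matrix.mul_assoc, ← Matrix.mul_assoc ρ, hcomp, Matrix.mul_smul, trace_smul,
      smul_eq_mul, sq]
  have sq_τ : trace (ρ * τ * (ρ * τ)) = trace (τ * ρ) ^ 2 := by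
    rw [← Matrix.mul_assoc, hcomp, smul_mul, trace_smul, comm_τ, smul_eq_mul, sq]
  have cross_στ : trace (σ * ρ * (ρ * τ)) = trace (τ * σ * ρ) := by
    rw [Matrix.mul_assoc, ← Matrix.mul_assoc ρ, hidem, ← Matrix.mul_assoc, trace_mul_comm,
      Matrix.mul_assoc]
  have cross_τσ : trace (ρ * τ * (σ * ρ)) = trace (τ * σ * ρ) := by
    rw [Matrix.mul_assoc, ← Matrix.mul_assoc τ, decay_left]
  have σ_ρ : trace (σ * ρ * ρ) = trace (σ * ρ) := by rw [Matrix.mul_assoc, hidem]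
  have ρ_σ : trace (ρ * (σ * ρ)) = trace (σ * ρ) := by rw [trace_mul_comm, σ_ρ]
  have ρ_τ : trace (ρ * (ρ * τ)) = trace (τ * ρ) := by rw [← Matrix.mul_assoc, hidem, comm_τ]
  have τ_ρ : trace (ρ * τ * ρ) = trace (τ * ρ) := by rw [trace_mul_comm, ρ_τ]
  simp only [Matrix.mul_add, Matrix.add_mul, Matrix.mul_sub, Matrix.sub_mul, Matrix.mul_smul,
    smul_mul, trace_add, trace_sub, trace_smul, smul_eq_mul, jump, decay_left, decay_right,
    sq_σ, sq_τ, cross_στ, cross_τσ, σ_ρ, ρ_σ, ρ_τ, τ_ρ, comm_τ, hidem, htr]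
  ring

/-- On pure states, the Itô drift of tr(ρ_t²) for a homodyne-detection
channel (dissipator contribution plus second-order Itô correction) vanishes:
2·tr(ρ·(σρσ* − ½{σ*σ, ρ})) + tr((𝒢ρ)²) = 0. -/
theorem homodyne_purity_drift_vanishes
    (n : ℕ) (hn : 1 ≤ n)
    (σ : Matrix (Fin n) (Fin n) ℂ)
    (ψ : Fin n → ℂ) (hψ : star ψ ⬝ᵥ ψ = 1) :
    let ρ : Matrix (Fin n) (Fin n) ℂ := vecMulVec ψ (star ψ)
    let G : Matrix (Fin n) (Fin n) ℂ :=
      σ * ρ + ρ * σᴴ - (Matrix.trace (σ * ρ + ρ * σᴴ)) • ρ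
    2 * Matrix.trace (ρ * (σ * ρ * σᴴ - (1 / 2 : ℂ) • (σᴴ * σ * ρ + ρ * (σᴴ * σ))))
      + Matrix.trace (G * G) = 0 := by
  refine purity_drift_eq_zero_of_compression σ σᴴ _ ?_ ?_
    (vecMulVec_star_mul_mul_vecMulVec_star ψ)
  · rw [trace_vecMulVec, dotProduct_comm, hψ]
  · rw [vecMulVec_mul_vecMulVec, hψ, one_smul]
end

section
/- Let n ≥ 1, let H ∈ Mₙ(ℂ) be Hermitian, let σ₁, …, σ_L ∈ Mₙ(ℂ) with the index set {1,…,L} partitioned into disjoint subsets HD and PC, and let ρ = ψψ* ∈ Mₙ(ℂ) for a unit vector ψ ∈ ℂⁿ. Define the effective drift ℒ̃ρ = −i[H, ρ] + Σ_{l=1}^L (σ_l ρ σ_l* − ½{σ_l* σ_l, ρ}) − Σ_{l∈PC} (σ_l ρ σ_l* − tr(σ_l ρ σ_l*)·ρ) and, for l ∈ HD, 𝒢_l ρ = σ_l ρ + ρ σ_l* − tr(σ_l ρ + ρ σ_l*)·ρ. Then 2·tr(ρ · ℒ̃ρ) + Σ_{l∈HD} tr((𝒢_l ρ)²) = 0.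 -/
open Matrix BigOperators

section PureState

variable {n : Type*} [Fintype n]

theorem vecMulVec_star_mul_mul_self (ψ : n → ℂ) (A : Matrix n n ℂ) :
    vecMulVec ψ (star ψ) * A * vecMulVec ψ (star ψ) =
      trace (A * vecMulVec ψ (star ψ)) • vecMulVec ψ (star ψ) := by
  rw [vecMulVec_mul, vecMulVec_mul_vecMulVec, mul_vecMulVec, trace_vecMulVec,
    ← dotProduct_mulVec, dotProduct_comm (A *ᵥ ψ), vecMulVec_smul]

variable {ρ : Matrix n n ℂ}

theorem trace_mul_commutator_self (H : Matrix n n ℂ) :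
    trace (ρ * (H * ρ - ρ * H)) = 0 := by
  rw [mul_sub, trace_sub, ← Matrix.mul_assoc, trace_mul_comm (ρ * H) ρ, sub_self]

theorem trace_mul_sandwich (hρ : ∀ A, ρ * A * ρ = trace (A * ρ) • ρ) (S T : Matrix n n ℂ) :
    trace (ρ * (S * ρ * T)) = trace (S * ρ) * trace (T * ρ) := by
  rw [← Matrix.mul_assoc, ← Matrix.mul_assoc, hρ, Matrix.smul_mul, trace_smul, smul_eq_mul,
    trace_mul_comm ρ T]

/-- Trace of `ρ` against the Lindblad dissipator of `S` at a rank-one projection `ρ`. -/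
theorem trace_mul_dissipator (hρ : ∀ A, ρ * A * ρ = trace (A * ρ) • ρ) (hρρ : ρ * ρ = ρ)
    (S T : Matrix n n ℂ) :
    trace (ρ * (S * ρ * T - (1 / 2 : ℂ) • (T * S * ρ + ρ * (T * S)))) =
      trace (S * ρ) * trace (T * ρ) - trace (T * S * ρ) := by
  have h₁ : trace (ρ * (T * S * ρ)) = trace (T * S * ρ) := by
    rw [trace_mul_comm, Matrix.mul_assoc (T * S), hρρ]
  have h₂ : trace (ρ * (ρ * (T * S))) = trace (T * S * ρ) := by
    rw [← Matrix.mul_assoc, hρρ, trace_mul_comm]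
  rw [mul_sub, Matrix.mul_smul, mul_add, trace_sub, trace_smul, trace_add,
    trace_mul_sandwich hρ, h₁, h₂, smul_eq_mul]
  ring

/-- Trace of `ρ` against the photon-counting correction of `S` at a rank-one projection `ρ`. -/
theorem trace_mul_counting_correction (hρ : ∀ A, ρ * A * ρ = trace (A * ρ) • ρ)
    (hρρ : ρ * ρ = ρ) (htr : trace ρ = 1) (S T : Matrix n n ℂ) :
    trace (ρ * (S * ρ * T - trace (S * ρ * T) • ρ)) =
      trace (S * ρ) * trace (T * ρ) - trace (T * S * ρ) := by
  rw [mul_sub, Matrix.mul_smul, trace_sub, trace_smul, trace_mul_sandwich hρ, hρρ, htr,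
    smul_eq_mul, mul_one, trace_mul_comm (S * ρ), Matrix.mul_assoc T]

/-- Trace of the squared homodyne innovation of `S` at a rank-one projection `ρ`. -/
theorem trace_innovation_sq (hρ : ∀ A, ρ * A * ρ = trace (A * ρ) • ρ)
    (hρρ : ρ * ρ = ρ) (htr : trace ρ = 1) (S T : Matrix n n ℂ) :
    trace ((S * ρ + ρ * T - trace (S * ρ + ρ * T) • ρ) *
        (S * ρ + ρ * T - trace (S * ρ + ρ * T) • ρ)) =
      2 * (trace (T * S * ρ) - trace (S * ρ) * trace (T * ρ)) := by
  have hTρ : trace (ρ * T) = trace (T * ρ) := trace_mul_comm _ _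
  have h₁ : trace (S * ρ * (S * ρ)) = trace (S * ρ) * trace (S * ρ) := by
    rw [Matrix.mul_assoc, ← Matrix.mul_assoc ρ, hρ, Matrix.mul_smul, trace_smul, smul_eq_mul]
  have h₂ : trace (S * ρ * (ρ * T)) = trace (T * S * ρ) := by
    rw [Matrix.mul_assoc, ← Matrix.mul_assoc ρ, hρρ, ← Matrix.mul_assoc, trace_mul_comm,
      Matrix.mul_assoc]
  have h₃ : trace (ρ * T * (S * ρ)) = trace (T * S * ρ) := by
    rw [trace_mul_comm, h₂]
  have h₄ : trace (ρ * T * (ρ * T)) = trace (T * ρ) * trace (T * ρ) := by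
    rw [← Matrix.mul_assoc, hρ, Matrix.smul_mul, trace_smul, smul_eq_mul, hTρ]
  have h₅ : trace (S * ρ * ρ) = trace (S * ρ) := by rw [Matrix.mul_assoc, hρρ]
  have h₆ : trace (ρ * (S * ρ)) = trace (S * ρ) := by rw [trace_mul_comm, h₅]
  have h₇ : trace (ρ * (ρ * T)) = trace (T * ρ) := by rw [← Matrix.mul_assoc, hρρ, hTρ]
  have h₈ : trace (ρ * T * ρ) = trace (T * ρ) := by rw [trace_mul_comm, h₇]
  simp only [mul_sub, sub_mul, mul_add, add_mul, Matrix.mul_smul, Matrix.smul_mul, trace_add, trace_sub,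
    trace_smul, smul_eq_mul, h₁, h₂, h₃, h₄, h₅, h₆, h₇, h₈, hρρ, htr, hTρ]
  ring

end PureState

/-- The full Itô drift of tr(ρ_t²) vanishes on pure states:
2·tr(ρ · ℒ̃ρ) + Σ_{l∈HD} tr((𝒢_l ρ)²) = 0, where ℒ̃ is the effective drift of the
quantum filtering equation and 𝒢_l are the homodyne-detection innovation operators. -/
theorem purity_drift_vanishes_on_pure_states
    (n L : ℕ) (hn : 1 ≤ n)
    (H : Matrix (Fin n) (Fin n) ℂ) (hH : H.IsHermitian)
    (σ : Fin L → Matrix (Fin n) (Fin n) ℂ)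
    (HD PC : Finset (Fin L)) (hdisj : Disjoint HD PC) (hpart : HD ∪ PC = Finset.univ)
    (ψ : Fin n → ℂ) (hψ : star ψ ⬝ᵥ ψ = 1) :
    let ρ : Matrix (Fin n) (Fin n) ℂ := vecMulVec ψ (star ψ)
    let Ltilde : Matrix (Fin n) (Fin n) ℂ :=
      -(Complex.I) • (H * ρ - ρ * H)
        + ∑ l, (σ l * ρ * (σ l)ᴴ
            - (1 / 2 : ℂ) • ((σ l)ᴴ * σ l * ρ + ρ * ((σ l)ᴴ * σ l)))
        - ∑ l ∈ PC, (σ l * ρ * (σ l)ᴴ - (Matrix.trace (σ l * ρ * (σ l)ᴴ)) • ρ)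
    let G : Fin L → Matrix (Fin n) (Fin n) ℂ := fun l =>
      σ l * ρ + ρ * (σ l)ᴴ - (Matrix.trace (σ l * ρ + ρ * (σ l)ᴴ)) • ρ
    2 * Matrix.trace (ρ * Ltilde) + ∑ l ∈ HD, Matrix.trace (G l * G l) = 0 := by
  intro ρ Ltilde G
  have htr : trace ρ = 1 := by
    rw [trace_vecMulVec, dotProduct_comm, hψ]
  have hρ : ∀ A, ρ * A * ρ = trace (A * ρ) • ρ := vecMulVec_star_mul_mul_self ψ
  have hρρ : ρ * ρ = ρ := by
    simpa [htr] using hρ 1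
  have hL : trace (ρ * Ltilde) =
      ∑ l ∈ HD, (trace (σ l * ρ) * trace ((σ l)ᴴ * ρ) - trace ((σ l)ᴴ * σ l * ρ)) := by
    simp only [Ltilde]
    rw [mul_sub, mul_add, Matrix.mul_smul, trace_sub, trace_add, trace_smul,
      trace_mul_commutator_self, smul_zero, zero_add, Finset.mul_sum, Finset.mul_sum,
      trace_sum, trace_sum]
    simp only [trace_mul_dissipator hρ hρρ, trace_mul_counting_correction hρ hρρ htr]
    rw [← hpart, Finset.sum_union hdisj, add_sub_cancel_right]
  simp only [hL, G, trace_innovation_sq hρ hρρ htr]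
  rw [Finset.mul_sum, ← Finset.sum_add_distrib]
  exact Finset.sum_eq_zero fun l _ => by ring
end
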